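/- Let C be a copula with attained asymmetry m. Then g(m) ≤ γ(C) ≤ h(m), where γ(C) is Gini's gamma of C, g(m) = 4m² − 1 if 0 ≤ m ≤ 1/4 and g(m) = 20m² − 8m if 1/4 ≤ m ≤ 1/3, and h(m) = 1 − 8m² if 0 ≤ m ≤ 1/6, h(m) = 12m − 44m² if 1/6 ≤ m ≤ 1/5, h(m) = 1 + 2m − 19m² if 1/5 ≤ m ≤ 1/4, and h(m) = 2 − 6m − 3m² if 1/4 ≤ m ≤ 1/3. In particular, if m = 1/3 then γ(C) ∈ [−4/9, −1/3]. -/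

import Mathlib

open Set MeasureTheory intervalIntegral

/-- A bivariate copula: boundary conditions plus the 2-increasing property. -/
def IsCopula (C : ℝ → ℝ → ℝ) : Prop :=
  (∀ u ∈ Set.Icc (0:ℝ) 1, C u 0 = 0 ∧ C 0 u = 0 ∧ C u 1 = u ∧ C 1 u = u) ∧
  ∀ u₁ u₂ v₁ v₂ : ℝ, 0 ≤ u₁ → u₁ ≤ u₂ → u₂ ≤ 1 → 0 ≤ v₁ → v₁ ≤ v₂ → v₂ ≤ 1 →
    0 ≤ C u₂ v₂ - C u₂ v₁ - C u₁ v₂ + C u₁ v₁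

/-- The lower bound function C̲^{(a,b)}_c. -/
noncomputable def lowerC (a b c : ℝ) : ℝ → ℝ → ℝ := fun u v =>
  max (max (u + v - 1) 0)
    (min (min (max (a + b - 1) 0 + c) (u - a + (max (a + b - 1) 0 + c)))
      (min (v - b + (max (a + b - 1) 0 + c)) (u + v - a - b + (max (a + b - 1) 0 + c))))

/-- The upper bound function C̄^{(a,b)}_c. -/
noncomputable def upperC (a b c : ℝ) : ℝ → ℝ → ℝ := fun u v =>
  min (min u v)
    (max (max (min a b - c) (u - b + (min a b - c)))
      (max (v - a + (min a b - c)) (u + v - a - b + (min a b - c))))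

/-- Spearman's rho of a copula. -/
noncomputable def spearmanRho (C : ℝ → ℝ → ℝ) : ℝ :=
  12 * (∫ u in (0:ℝ)..1, ∫ v in (0:ℝ)..1, C u v) - 3

/-- Spearman's footrule of a copula. -/
noncomputable def spearmanFootrule (C : ℝ → ℝ → ℝ) : ℝ :=
  6 * (∫ u in (0:ℝ)..1, C u u) - 2

/-- Gini's gamma of a copula. -/
noncomputable def giniGamma (C : ℝ → ℝ → ℝ) : ℝ :=
  4 * (∫ u in (0:ℝ)..1, (C u u + C u (1 - u))) - 2

/-- Blomqvist's beta of a copula. -/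
noncomputable def blomqvistBeta (C : ℝ → ℝ → ℝ) : ℝ :=
  4 * C (1/2) (1/2) - 1

/-!
After exchanging the arguments of `C`, or the points `a` and `b`, we may assume `a ≤ b` and
`C a b - C b a = m ≥ 0`. Monotonicity and the Lipschitz property then confine `C` between
`lowerC a b m` and `upperC a b m`, and restrict `m` to `m ≤ min a (1 - b)` and `m ≤ b - a`.

On the diagonal and the antidiagonal, eliminating `a` and `b` bounds `lowerC` and `upperC` by
combinations of `u` and of triangle functions of slope `±1`; `upperC` is largest on the antidiagonal
for `(a, b) = (1 - 2m, 1 - m)`. The integral of such a triangle is the square of its height, and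
some of the heights are the positive parts of `(6m - 1) / 2`, `(5m - 1) / 2`, `(4m - 1) / 2`, whence
the breakpoints `1 / 6`, `1 / 5`, `1 / 4`.
-/

/-- The triangle function of height `m ≥ 0` and slopes `±1` centred at `a`. The bounds on the
diagonal and antidiagonal sections of a copula are built from such functions. -/
noncomputable def tent (a m u : ℝ) : ℝ := max (m - |u - a|) 0

section Tent

variable {a m : ℝ}

@[fun_prop]
theorem continuous_tent (a m : ℝ) : Continuous (tent a m) := by
  unfold tent
  fun_prop

theorem tent_of_le_abs {u : ℝ} (hu : m ≤ |u - a|) : tent a m u = 0 :=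
  max_eq_right (sub_nonpos.2 hu)

theorem tent_of_abs_le {u : ℝ} (hu : |u - a| ≤ m) : tent a m u = m - |u - a| :=
  max_eq_left (sub_nonneg.2 hu)

theorem integral_tent {p q : ℝ} (hm : 0 ≤ m) (hp : p ≤ a - m) (hq : a + m ≤ q) :
    ∫ u in p..q, tent a m u = m ^ 2 := by
  have hint (x y : ℝ) : IntervalIntegrable (tent a m) volume x y :=
    (continuous_tent a m).intervalIntegrable x y
  have hleft : ∫ u in p..a - m, tent a m u = 0 := by
    refine integral_zero_ae (.of_forall fun u hu => tent_of_le_abs ?_)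
    rw [uIoc_of_le hp] at hu
    exact le_abs.2 (.inr (by linarith [hu.2]))
  have hright : ∫ u in a + m..q, tent a m u = 0 := by
    refine integral_zero_ae (.of_forall fun u hu => tent_of_le_abs ?_)
    rw [uIoc_of_le hq] at hu
    exact le_abs.2 (.inl (by linarith [hu.1]))
  have hup : ∫ u in a - m..a, tent a m u = ∫ u in a - m..a, (u - (a - m)) := by
    refine integral_congr fun u hu => ?_
    rw [uIcc_of_le (by linarith)] at hu
    have habs : |u - a| = a - u := by rw [abs_of_nonpos (by linarith [hu.2]), neg_sub]
    rw [tent_of_abs_le (by linarith [hu.1]), habs]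
    ring
  have hdown : ∫ u in a..a + m, tent a m u = ∫ u in a..a + m, (a + m - u) := by
    refine integral_congr fun u hu => ?_
    rw [uIcc_of_le (by linarith)] at hu
    have habs : |u - a| = u - a := abs_of_nonneg (by linarith [hu.1])
    rw [tent_of_abs_le (by linarith [hu.2]), habs]
    ring
  rw [← integral_add_adjacent_intervals (hint p (a - m)) (hint _ q),
    ← integral_add_adjacent_intervals (hint (a - m) a) (hint _ q),
    ← integral_add_adjacent_intervals (hint a (a + m)) (hint _ q), hleft, hright, hup, hdown,
    intervalIntegral.integral_comp_sub_right fun u => u,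
    intervalIntegral.integral_comp_sub_left fun u => u, integral_id, integral_id]
  ring

end Tent

/-- The tent of height `1 / 2` truncated to a plateau of height `1 / 2 - d`, with a spike of height
`e` at the left end of the plateau and one of height `f` at its right end. It bounds the
antidiagonal section of a copula of given asymmetry. -/
noncomputable def spikedPlateau (d e f u : ℝ) : ℝ :=
  tent (1 / 2) (1 / 2) u - tent (1 / 2) d u + tent (1 / 2 - d + e) e u + tent (1 / 2 + d - f) f u

@[fun_prop]
theorem continuous_spikedPlateau (d e f : ℝ) : Continuous (spikedPlateau d e f) := by
  unfold spikedPlateau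
  fun_prop

theorem integral_spikedPlateau {d e f : ℝ} (hd : 0 ≤ d) (hd' : d ≤ 1 / 2) (he : 0 ≤ e)
    (hf : 0 ≤ f) (hed : 2 * e ≤ 1 / 2 + d) (hfd : 2 * f ≤ 1 / 2 + d) :
    ∫ u in (0 : ℝ)..1, spikedPlateau d e f u = 1 / 4 - d ^ 2 + e ^ 2 + f ^ 2 := by
  have hint (a m : ℝ) : IntervalIntegrable (tent a m) volume 0 1 :=
    (continuous_tent a m).intervalIntegrable 0 1
  unfold spikedPlateau
  rw [intervalIntegral.integral_add (((hint _ _).sub (hint _ _)).add (hint _ _)) (hint _ _),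
    intervalIntegral.integral_add ((hint _ _).sub (hint _ _)) (hint _ _),
    intervalIntegral.integral_sub (hint _ _) (hint _ _),
    integral_tent (by norm_num) (by norm_num) (by norm_num),
    integral_tent hd (by linarith) (by linarith), integral_tent he (by linarith) (by linarith),
    integral_tent hf (by linarith) (by linarith)]
  ring

section ExtremalFunctions

variable {a b c m u v : ℝ}

theorem lowerC_eq_max : lowerC a b c u v =
    max (max (u + v - 1) 0) (max (a + b - 1) 0 + c - max (a - u) 0 - max (b - v) 0) := by
  unfold lowerC
  grind

theorem upperC_eq_min : upperC a b c u v =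
    min (min u v) (min a b - c + max (u - b) 0 + max (v - a) 0) := by
  unfold upperC
  grind

theorem tents_le_lowerC_diag (ham : m ≤ a) (hab : a + m ≤ b) (hbm : b + m ≤ 1) :
    u - tent (1 / 2) (1 / 2) u + tent (1 / 2) (max (4 * m - 1) 0 / 2) u ≤ lowerC a b m u u := by
  rw [lowerC_eq_max]
  grind [tent]

theorem tent_le_lowerC_antidiag : tent a m u ≤ lowerC a b m u (1 - u) := by
  rw [lowerC_eq_max]
  grind [tent]

theorem upperC_diag_le_tents (hab : a + m ≤ b) :
    upperC a b m u u ≤ u - tent a m u - tent (a + m) m u := by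
  rw [upperC_eq_min]
  grind [tent]

theorem upperC_antidiag_le_extremal (ham : m ≤ a) (hab : a + m ≤ b) (hbm : b + m ≤ 1) :
    upperC a b m u (1 - u) ≤ upperC (1 - 2 * m) (1 - m) m u (1 - u) := by
  simp only [upperC_eq_min]
  grind

theorem upperC_extremal_antidiag_le_spikedPlateau :
    upperC (1 - 2 * m) (1 - m) m u (1 - u) ≤
      spikedPlateau (max (6 * m - 1) 0 / 2) (max (5 * m - 1) 0 / 2) (max (4 * m - 1) 0 / 2) u := by
  rw [upperC_eq_min, spikedPlateau]
  rcases le_total (6 * m - 1) 0 with h6 | h6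
  · have h5 : 5 * m - 1 ≤ 0 := by linarith
    have h4 : 4 * m - 1 ≤ 0 := by linarith
    rw [max_eq_right h6, max_eq_right h5, max_eq_right h4]
    grind [tent]
  rw [max_eq_left h6]
  rcases le_total (5 * m - 1) 0 with h5 | h5
  · have h4 : 4 * m - 1 ≤ 0 := by linarith
    rw [max_eq_right h5, max_eq_right h4]
    grind [tent]
  rw [max_eq_left h5]
  rcases le_total (4 * m - 1) 0 with h4 | h4
  · rw [max_eq_right h4]
    grind [tent]
  · rw [max_eq_left h4]
    grind [tent]

end ExtremalFunctions

namespace IsCopula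

variable {C : ℝ → ℝ → ℝ} {a b u u' v v' : ℝ}

theorem transpose (hC : IsCopula C) : IsCopula fun u v => C v u := by
  refine ⟨fun u hu => ?_, fun u₁ u₂ v₁ v₂ hu₁ hu hu₂ hv₁ hv hv₂ => ?_⟩
  · obtain ⟨h₁, h₂, h₃, h₄⟩ := hC.1 u hu
    exact ⟨h₂, h₁, h₄, h₃⟩
  · linarith [hC.2 v₁ v₂ u₁ u₂ hv₁ hv hv₂ hu₁ hu hu₂]

theorem mono_left (hC : IsCopula C) (hu : 0 ≤ u) (huu' : u ≤ u') (hu' : u' ≤ 1)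
    (hv : v ∈ Icc (0 : ℝ) 1) : C u v ≤ C u' v := by
  have hrect := hC.2 u u' 0 v hu huu' hu' le_rfl hv.1 hv.2
  rw [(hC.1 u ⟨hu, huu'.trans hu'⟩).1, (hC.1 u' ⟨hu.trans huu', hu'⟩).1] at hrect
  linarith

theorem sub_le_sub_left (hC : IsCopula C) (hu : 0 ≤ u) (huu' : u ≤ u') (hu' : u' ≤ 1)
    (hv : v ∈ Icc (0 : ℝ) 1) : C u' v - C u v ≤ u' - u := by
  have hrect := hC.2 u u' v 1 hu huu' hu' hv.1 hv.2 le_rfl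
  rw [(hC.1 u ⟨hu, huu'.trans hu'⟩).2.2.1, (hC.1 u' ⟨hu.trans huu', hu'⟩).2.2.1] at hrect
  linarith

theorem sub_le_max_left (hC : IsCopula C) (hu : u ∈ Icc (0 : ℝ) 1) (hu' : u' ∈ Icc (0 : ℝ) 1)
    (hv : v ∈ Icc (0 : ℝ) 1) : C u v - C u' v ≤ max (u - u') 0 := by
  rcases le_total u u' with huu' | huu'
  · exact le_max_of_le_right (sub_nonpos.2 (hC.mono_left hu.1 huu' hu'.2 hv))
  · exact le_max_of_le_left (hC.sub_le_sub_left hu'.1 huu' hu.2 hv)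

theorem sub_le_max_add_max (hC : IsCopula C) (hu : u ∈ Icc (0 : ℝ) 1) (hu' : u' ∈ Icc (0 : ℝ) 1)
    (hv : v ∈ Icc (0 : ℝ) 1) (hv' : v' ∈ Icc (0 : ℝ) 1) :
    C u v - C u' v' ≤ max (u - u') 0 + max (v - v') 0 := by
  linarith [hC.sub_le_max_left hu hu' hv, hC.transpose.sub_le_max_left hv hv' hu']

theorem lipschitzOnWith_uncurry (hC : IsCopula C) :
    LipschitzOnWith 2 (Function.uncurry C) (Icc 0 1 ×ˢ Icc 0 1) := by
  refine LipschitzOnWith.of_le_add_mul 2 fun x ⟨hxu, hxv⟩ y ⟨hyu, hyv⟩ => ?_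
  have hfst : max (x.1 - y.1) 0 ≤ dist x y :=
    max_le ((le_abs_self _).trans (le_max_left _ _)) dist_nonneg
  have hsnd : max (x.2 - y.2) 0 ≤ dist x y :=
    max_le ((le_abs_self _).trans (le_max_right _ _)) dist_nonneg
  have hsub := hC.sub_le_max_add_max hxu hyu hxv hyv
  simp only [Function.uncurry, NNReal.coe_ofNat]
  linarith

theorem nonneg (hC : IsCopula C) (hu : u ∈ Icc (0 : ℝ) 1) (hv : v ∈ Icc (0 : ℝ) 1) : 0 ≤ C u v :=
  (hC.1 v hv).2.1 ▸ hC.mono_left le_rfl hu.1 hu.2 hv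

theorem le_right (hC : IsCopula C) (hu : u ∈ Icc (0 : ℝ) 1) (hv : v ∈ Icc (0 : ℝ) 1) : C u v ≤ v :=
  (hC.mono_left hu.1 hu.2 le_rfl hv).trans_eq (hC.1 v hv).2.2.2

theorem le_left (hC : IsCopula C) (hu : u ∈ Icc (0 : ℝ) 1) (hv : v ∈ Icc (0 : ℝ) 1) : C u v ≤ u :=
  hC.transpose.le_right hv hu

theorem add_sub_one_le (hC : IsCopula C) (hu : u ∈ Icc (0 : ℝ) 1) (hv : v ∈ Icc (0 : ℝ) 1) :
    u + v - 1 ≤ C u v := by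
  linarith [hC.sub_le_sub_left hu.1 hu.2 le_rfl hv, (hC.1 v hv).2.2.2]

theorem lowerC_le (hC : IsCopula C) (ha : a ∈ Icc (0 : ℝ) 1) (hb : b ∈ Icc (0 : ℝ) 1)
    (hu : u ∈ Icc (0 : ℝ) 1) (hv : v ∈ Icc (0 : ℝ) 1) :
    lowerC a b (C a b - C b a) u v ≤ C u v := by
  have hfrechet : max (a + b - 1) 0 ≤ C b a :=
    max_le (by linarith [hC.add_sub_one_le hb ha]) (hC.nonneg hb ha)
  rw [lowerC_eq_max]
  refine max_le (max_le (hC.add_sub_one_le hu hv) (hC.nonneg hu hv)) ?_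
  linarith [hC.sub_le_max_add_max ha hu hb hv]

theorem le_upperC (hC : IsCopula C) (ha : a ∈ Icc (0 : ℝ) 1) (hb : b ∈ Icc (0 : ℝ) 1)
    (hu : u ∈ Icc (0 : ℝ) 1) (hv : v ∈ Icc (0 : ℝ) 1) :
    C u v ≤ upperC a b (C a b - C b a) u v := by
  have hfrechet : C a b ≤ min a b := le_min (hC.le_left ha hb) (hC.le_right ha hb)
  rw [upperC_eq_min]
  refine le_min (le_min (hC.le_left hu hv) (hC.le_right hu hv)) ?_
  linarith [hC.sub_le_max_add_max hu hb hv ha]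

theorem sub_swap_le (hC : IsCopula C) (ha : a ∈ Icc (0 : ℝ) 1) (hb : b ∈ Icc (0 : ℝ) 1)
    (hab : a ≤ b) : C a b - C b a ≤ a ∧ C a b - C b a ≤ b - a ∧ C a b - C b a ≤ 1 - b := by
  have hlip := hC.sub_le_max_add_max ha hb hb ha
  rw [max_eq_right (sub_nonpos.2 hab), max_eq_left (sub_nonneg.2 hab)] at hlip
  refine ⟨?_, by linarith, ?_⟩
  · linarith [hC.le_left ha hb, hC.nonneg hb ha]
  · linarith [hC.le_left ha hb, hC.add_sub_one_le hb ha]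

theorem intervalIntegrable_diag (hC : IsCopula C) :
    IntervalIntegrable (fun u => C u u) volume 0 1 := by
  refine ContinuousOn.intervalIntegrable ?_
  rw [uIcc_of_le zero_le_one]
  exact hC.lipschitzOnWith_uncurry.continuousOn.comp (f := fun u : ℝ => (u, u)) (by fun_prop)
    fun u hu => ⟨hu, hu⟩

theorem intervalIntegrable_antidiag (hC : IsCopula C) :
    IntervalIntegrable (fun u => C u (1 - u)) volume 0 1 := by
  refine ContinuousOn.intervalIntegrable ?_
  rw [uIcc_of_le zero_le_one]
  exact hC.lipschitzOnWith_uncurry.continuousOn.comp (f := fun u : ℝ => (u, 1 - u)) (by fun_prop)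
    fun u hu => ⟨hu, Icc.mem_iff_one_sub_mem.1 hu⟩

theorem giniGamma_eq (hC : IsCopula C) :
    giniGamma C = 4 * ((∫ u in (0 : ℝ)..1, C u u) + ∫ u in (0 : ℝ)..1, C u (1 - u)) - 2 := by
  rw [giniGamma, intervalIntegral.integral_add hC.intervalIntegrable_diag
    hC.intervalIntegrable_antidiag]

theorem giniGamma_transpose (hC : IsCopula C) : giniGamma (fun u v => C v u) = giniGamma C := by
  have hreflect := intervalIntegral.integral_comp_sub_left (fun u => C u (1 - u)) (1 : ℝ)
    (a := 0) (b := 1)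
  simp only [sub_sub_cancel, sub_self, sub_zero] at hreflect
  rw [hC.giniGamma_eq, hC.transpose.giniGamma_eq, hreflect]

theorem le_integral_diag (hC : IsCopula C) (ha : a ∈ Icc (0 : ℝ) 1) (hb : b ∈ Icc (0 : ℝ) 1)
    (hab : a ≤ b) :
    1 / 4 + (max (4 * (C a b - C b a) - 1) 0 / 2) ^ 2 ≤ ∫ u in (0 : ℝ)..1, C u u := by
  obtain ⟨hma, hmab, hmb⟩ := hC.sub_swap_le ha hb hab
  set m := C a b - C b a
  set t := max (4 * m - 1) 0 / 2
  have hint (a m : ℝ) : IntervalIntegrable (tent a m) volume 0 1 :=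
    (continuous_tent a m).intervalIntegrable 0 1
  have ht₀ : 0 ≤ t := by positivity
  have ht₁ : t ≤ 1 / 2 := by grind
  calc 1 / 4 + t ^ 2
      = ∫ u in (0 : ℝ)..1, (u - tent (1 / 2) (1 / 2) u + tent (1 / 2) t u) := by
        rw [intervalIntegral.integral_add (intervalIntegrable_id.sub (hint _ _)) (hint _ _),
          intervalIntegral.integral_sub intervalIntegrable_id (hint _ _), integral_id,
          integral_tent (by norm_num) (by norm_num) (by norm_num),
          integral_tent ht₀ (by linarith) (by linarith)]
        ring
    _ ≤ ∫ u in (0 : ℝ)..1, C u u := by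
        refine integral_mono_on zero_le_one (Continuous.intervalIntegrable (by fun_prop) _ _)
          hC.intervalIntegrable_diag fun u hu => ?_
        exact (tents_le_lowerC_diag hma (by linarith) (by linarith)).trans
          (hC.lowerC_le ha hb hu hu)

theorem integral_diag_le (hC : IsCopula C) (ha : a ∈ Icc (0 : ℝ) 1) (hb : b ∈ Icc (0 : ℝ) 1)
    (hab : a ≤ b) (hpos : 0 ≤ C a b - C b a) :
    ∫ u in (0 : ℝ)..1, C u u ≤ 1 / 2 - 2 * (C a b - C b a) ^ 2 := by
  obtain ⟨hma, hmab, hmb⟩ := hC.sub_swap_le ha hb hab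
  set m := C a b - C b a
  have hint (a m : ℝ) : IntervalIntegrable (tent a m) volume 0 1 :=
    (continuous_tent a m).intervalIntegrable 0 1
  calc ∫ u in (0 : ℝ)..1, C u u
      ≤ ∫ u in (0 : ℝ)..1, (u - tent a m u - tent (a + m) m u) := by
        refine integral_mono_on zero_le_one hC.intervalIntegrable_diag
          (Continuous.intervalIntegrable (by fun_prop) _ _) fun u hu => ?_
        exact (hC.le_upperC ha hb hu hu).trans (upperC_diag_le_tents (by linarith))
    _ = 1 / 2 - 2 * m ^ 2 := by
        rw [intervalIntegral.integral_sub (intervalIntegrable_id.sub (hint _ _)) (hint _ _),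
          intervalIntegral.integral_sub intervalIntegrable_id (hint _ _), integral_id,
          integral_tent hpos (by linarith) (by linarith),
          integral_tent hpos (by linarith) (by linarith)]
        ring

theorem sq_le_integral_antidiag (hC : IsCopula C) (ha : a ∈ Icc (0 : ℝ) 1)
    (hb : b ∈ Icc (0 : ℝ) 1) (hab : a ≤ b) (hpos : 0 ≤ C a b - C b a) :
    (C a b - C b a) ^ 2 ≤ ∫ u in (0 : ℝ)..1, C u (1 - u) := by
  obtain ⟨hma, -, hmb⟩ := hC.sub_swap_le ha hb hab
  rw [← integral_tent hpos (sub_nonneg.2 hma) (by linarith : a + (C a b - C b a) ≤ 1)]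
  refine integral_mono_on zero_le_one (Continuous.intervalIntegrable (by fun_prop) _ _)
    hC.intervalIntegrable_antidiag fun u hu => ?_
  exact tent_le_lowerC_antidiag.trans (hC.lowerC_le ha hb hu (Icc.mem_iff_one_sub_mem.1 hu))

theorem integral_antidiag_le (hC : IsCopula C) (ha : a ∈ Icc (0 : ℝ) 1) (hb : b ∈ Icc (0 : ℝ) 1)
    (hab : a ≤ b) :
    ∫ u in (0 : ℝ)..1, C u (1 - u) ≤ 1 / 4 - (max (6 * (C a b - C b a) - 1) 0 / 2) ^ 2
      + (max (5 * (C a b - C b a) - 1) 0 / 2) ^ 2 + (max (4 * (C a b - C b a) - 1) 0 / 2) ^ 2 := by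
  obtain ⟨hma, hmab, hmb⟩ := hC.sub_swap_le ha hb hab
  set m := C a b - C b a
  rw [← integral_spikedPlateau (by positivity) (by grind) (by positivity) (by positivity)
    (by grind) (by grind)]
  refine integral_mono_on zero_le_one hC.intervalIntegrable_antidiag
    (Continuous.intervalIntegrable (by fun_prop) _ _) fun u hu => ?_
  calc C u (1 - u) ≤ upperC a b m u (1 - u) :=
        hC.le_upperC ha hb hu (Icc.mem_iff_one_sub_mem.1 hu)
    _ ≤ upperC (1 - 2 * m) (1 - m) m u (1 - u) :=
        upperC_antidiag_le_extremal hma (by linarith) (by linarith)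
    _ ≤ spikedPlateau _ _ _ u := upperC_extremal_antidiag_le_spikedPlateau

end IsCopula

/-- The paper's lower bound `g` for Gini's gamma in terms of the asymmetry `m`. On passing the
breakpoint `1 / 4` the quadratic polynomial changes by the square of a linear form vanishing there,
so that one formula covers both pieces. -/
noncomputable def gammaLowerBound (m : ℝ) : ℝ := 4 * m ^ 2 - 1 + max (4 * m - 1) 0 ^ 2

/-- The paper's upper bound `h` for Gini's gamma in terms of the asymmetry `m`, in the same form as
`gammaLowerBound`, with breakpoints `1 / 6`, `1 / 5` and `1 / 4`. -/
noncomputable def gammaUpperBound (m : ℝ) : ℝ :=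
  1 - 8 * m ^ 2 - max (6 * m - 1) 0 ^ 2 + max (5 * m - 1) 0 ^ 2 + max (4 * m - 1) 0 ^ 2

section Pieces

variable {m : ℝ}

theorem gammaLowerBound_of_le (h : m ≤ 1 / 4) : gammaLowerBound m = 4 * m ^ 2 - 1 := by
  rw [gammaLowerBound, max_eq_right (by linarith)]
  ring

theorem gammaLowerBound_of_ge (h : 1 / 4 ≤ m) : gammaLowerBound m = 20 * m ^ 2 - 8 * m := by
  rw [gammaLowerBound, max_eq_left (by linarith)]
  ring

theorem gammaUpperBound_of_le_sixth (h : m ≤ 1 / 6) : gammaUpperBound m = 1 - 8 * m ^ 2 := by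
  rw [gammaUpperBound, max_eq_right (by linarith), max_eq_right (by linarith),
    max_eq_right (by linarith)]
  ring

theorem gammaUpperBound_of_sixth_le_of_le_fifth (h : 1 / 6 ≤ m) (h' : m ≤ 1 / 5) :
    gammaUpperBound m = 12 * m - 44 * m ^ 2 := by
  rw [gammaUpperBound, max_eq_left (by linarith), max_eq_right (by linarith),
    max_eq_right (by linarith)]
  ring

theorem gammaUpperBound_of_fifth_le_of_le_quarter (h : 1 / 5 ≤ m) (h' : m ≤ 1 / 4) :
    gammaUpperBound m = 1 + 2 * m - 19 * m ^ 2 := by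
  rw [gammaUpperBound, max_eq_left (by linarith), max_eq_left (by linarith),
    max_eq_right (by linarith)]
  ring

theorem gammaUpperBound_of_quarter_le (h : 1 / 4 ≤ m) :
    gammaUpperBound m = 2 - 6 * m - 3 * m ^ 2 := by
  rw [gammaUpperBound, max_eq_left (by linarith), max_eq_left (by linarith),
    max_eq_left (by linarith)]
  ring

end Pieces

theorem gamma_vs_asymmetry_general {C : ℝ → ℝ → ℝ} (hC : IsCopula C) {a b : ℝ}
    (ha : a ∈ Icc (0 : ℝ) 1) (hb : b ∈ Icc (0 : ℝ) 1) :
    giniGamma C ∈ Icc (gammaLowerBound |C a b - C b a|) (gammaUpperBound |C a b - C b a|) := by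
  wlog hab : a ≤ b generalizing a b
  · rw [abs_sub_comm]
    exact this hb ha (le_of_not_ge hab)
  wlog hpos : 0 ≤ C a b - C b a generalizing C
  · have hswap := this hC.transpose (by linarith)
    rwa [hC.giniGamma_transpose, abs_sub_comm] at hswap
  have hdiag := hC.le_integral_diag ha hb hab
  have hdiag' := hC.integral_diag_le ha hb hab hpos
  have hanti := hC.sq_le_integral_antidiag ha hb hab hpos
  have hanti' := hC.integral_antidiag_le ha hb hab
  rw [abs_of_nonneg hpos, hC.giniGamma_eq]
  unfold gammaLowerBound gammaUpperBound
  constructor <;> linarith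

theorem gamma_vs_asymmetry (C : ℝ → ℝ → ℝ) (m : ℝ) (hC : IsCopula C)
    (hbound : ∀ u ∈ Set.Icc (0:ℝ) 1, ∀ v ∈ Set.Icc (0:ℝ) 1, |C u v - C v u| ≤ m)
    (hattain : ∃ a ∈ Set.Icc (0:ℝ) 1, ∃ b ∈ Set.Icc (0:ℝ) 1, |C a b - C b a| = m) :
    ((0 ≤ m → m ≤ 1/4 → 4 * m^2 - 1 ≤ giniGamma C) ∧
     (1/4 ≤ m → m ≤ 1/3 → 20 * m^2 - 8 * m ≤ giniGamma C)) ∧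
    ((0 ≤ m → m ≤ 1/6 → giniGamma C ≤ 1 - 8 * m^2) ∧
     (1/6 ≤ m → m ≤ 1/5 → giniGamma C ≤ 12 * m - 44 * m^2) ∧
     (1/5 ≤ m → m ≤ 1/4 → giniGamma C ≤ 1 + 2 * m - 19 * m^2) ∧
     (1/4 ≤ m → m ≤ 1/3 → giniGamma C ≤ 2 - 6 * m - 3 * m^2)) ∧
    (m = 1/3 → giniGamma C ∈ Set.Icc (-(4:ℝ)/9) (-(1:ℝ)/3)) := by
  obtain ⟨a, ha, b, hb, hm⟩ := hattain
  obtain ⟨hlower, hupper⟩ := hm ▸ gamma_vs_asymmetry_general hC ha hb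
  refine ⟨⟨fun _ h => gammaLowerBound_of_le h ▸ hlower,
      fun h _ => gammaLowerBound_of_ge h ▸ hlower⟩,
    ⟨fun _ h => gammaUpperBound_of_le_sixth h ▸ hupper,
      fun h h' => gammaUpperBound_of_sixth_le_of_le_fifth h h' ▸ hupper,
      fun h h' => gammaUpperBound_of_fifth_le_of_le_quarter h h' ▸ hupper,
      fun h _ => gammaUpperBound_of_quarter_le h ▸ hupper⟩, ?_⟩
  rintro rfl
  rw [gammaLowerBound_of_ge (by norm_num)] at hlower
  rw [gammaUpperBound_of_quarter_le (by norm_num)] at hupper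
  constructor <;> linarith
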